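/- arXiv:1304.5350 — 9 statements merged into one kernel-verified Lean document; each statement's English description precedes it below -/
import Mathlib

section
/- Let X be a nonempty set, let f, μ₀, μ₁, s₀, s₁ : X → ℝ and let b₀, b₁ be reals with 0 ≤ b₀ ≤ b₁. Assume that for all x ∈ X: |f(x) - μ₀(x)| ≤ b₀·s₀(x), |f(x) - μ₁(x)| ≤ b₁·s₁(x), and 0 ≤ s₁(x) ≤ s₀(x). Let x₁ ∈ X be a maximizer of μ₁ + b₁·s₁ over X. Then for every x• ∈ X, μ₀(x₁) + (b₀ + 2·b₁)·s₀(x₁) ≥ μ₀(x•) - b₀·s₀(x•). -/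
/-- Deterministic core of Lemma 2: the next UCB query lies in the relevant region. -/
theorem next_ucb_in_relevant_region {X : Type*} [Nonempty X]
    (f μ₀ μ₁ s₀ s₁ : X → ℝ) (b₀ b₁ : ℝ) (hb₀ : 0 ≤ b₀) (hb : b₀ ≤ b₁)
    (hconf₀ : ∀ x : X, |f x - μ₀ x| ≤ b₀ * s₀ x)
    (hconf₁ : ∀ x : X, |f x - μ₁ x| ≤ b₁ * s₁ x)
    (hs₁ : ∀ x : X, 0 ≤ s₁ x) (hs : ∀ x : X, s₁ x ≤ s₀ x)
    (x₁ : X) (hx₁ : ∀ x : X, μ₁ x + b₁ * s₁ x ≤ μ₁ x₁ + b₁ * s₁ x₁) :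
    ∀ xb : X, μ₀ xb - b₀ * s₀ xb ≤ μ₀ x₁ + (b₀ + 2 * b₁) * s₀ x₁ := by
  intro xb
  have h1 := abs_le.mp (hconf₀ xb)
  have h2 := abs_le.mp (hconf₁ xb)
  have h3 := abs_le.mp (hconf₀ x₁)
  have h4 := abs_le.mp (hconf₁ x₁)
  have h5 := hx₁ xb
  have h6 := mul_le_mul_of_nonneg_left (hs x₁) (hb₀.trans hb)
  have h7 : (b₀ + 2 * b₁) * s₀ x₁ = b₀ * s₀ x₁ + 2 * (b₁ * s₀ x₁) := by ring
  linarith [h1.1, h1.2, h2.1, h2.2, h3.1, h3.2, h4.1, h4.2]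
end

section
/- Let X be a nonempty set, let f, μ₀, μ₁, s₀, s₁, s' : X → ℝ and let b₀, b₁ be reals with 0 ≤ b₀ ≤ b₁. Assume that for all x ∈ X: |f(x) - μ₀(x)| ≤ b₀·s₀(x), |f(x) - μ₁(x)| ≤ b₁·s₁(x), and 0 ≤ s₁(x) ≤ s'(x) ≤ s₀(x). Let x• ∈ X be a maximizer of μ₀ - b₀·s₀ over X, set y• = μ₀(x•) - b₀·s₀(x•), and define the relevant region R⁺ = {x ∈ X : μ₀(x) + (b₀ + 2·b₁)·s₀(x) ≥ y•}. Let x₁ ∈ X be a maximizer of μ₁ + b₁·s₁ over X, and let z ∈ R⁺ satisfy s'(x) ≤ s'(z) for all x ∈ R⁺. Then s₁(x₁) ≤ s'(z). -/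
/-- Deterministic form of Lemma 2: the confidence width at the next UCB query is
bounded by the one at the last Pure Exploration query of the previous batch. -/
theorem ucb_width_le_pe_width {X : Type*} [Nonempty X]
    (f μ₀ μ₁ s₀ s₁ s' : X → ℝ) (b₀ b₁ : ℝ) (hb₀ : 0 ≤ b₀) (hb : b₀ ≤ b₁)
    (hconf₀ : ∀ x : X, |f x - μ₀ x| ≤ b₀ * s₀ x)
    (hconf₁ : ∀ x : X, |f x - μ₁ x| ≤ b₁ * s₁ x)
    (hs₁ : ∀ x : X, 0 ≤ s₁ x) (hs₁' : ∀ x : X, s₁ x ≤ s' x) (hs'₀ : ∀ x : X, s' x ≤ s₀ x)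
    (xb : X) (hxb : ∀ x : X, μ₀ x - b₀ * s₀ x ≤ μ₀ xb - b₀ * s₀ xb)
    (x₁ : X) (hx₁ : ∀ x : X, μ₁ x + b₁ * s₁ x ≤ μ₁ x₁ + b₁ * s₁ x₁)
    (z : X) (hzR : z ∈ {x : X | μ₀ xb - b₀ * s₀ xb ≤ μ₀ x + (b₀ + 2 * b₁) * s₀ x})
    (hz : ∀ x ∈ {x : X | μ₀ xb - b₀ * s₀ xb ≤ μ₀ x + (b₀ + 2 * b₁) * s₀ x}, s' x ≤ s' z) :
    s₁ x₁ ≤ s' z := by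
  refine (hs₁' x₁).trans (hz x₁ ?_)
  show μ₀ xb - b₀ * s₀ xb ≤ μ₀ x₁ + (b₀ + 2 * b₁) * s₀ x₁
  have h1 := abs_le.mp (hconf₀ xb)
  have h2 := abs_le.mp (hconf₁ xb)
  have h3 := hx₁ xb
  have h4 := abs_le.mp (hconf₁ x₁)
  have h5 := abs_le.mp (hconf₀ x₁)
  have h6 : b₁ * s₁ x₁ ≤ b₁ * s₀ x₁ :=
    mul_le_mul_of_nonneg_left ((hs₁' x₁).trans (hs'₀ x₁)) (hb₀.trans hb)
  linarith [h1.1, h1.2, h2.1, h2.2, h4.1, h4.2, h5.1, h5.2]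
end

section
/- Let K ≥ 1 be a natural number and let σ : ℕ → ℕ → ℝ be a doubly indexed family of nonnegative reals such that for all t and all k with 1 ≤ k < K one has σ(t+1, 0) ≤ σ(t, k). Then for every natural number T, ∑_{t < T} σ(t, 0) ≤ ((K-1)/K)·σ(0, 0) + (1/K)·∑_{t < T} ∑_{k < K} σ(t, k). -/
/-- Deterministic form of Lemma 3: the sum of the deviations of the UCB queries is
bounded (up to a boundary term) by `1/K` times the sum of all deviations. -/
theorem sum_ucb_deviations_le (K : ℕ) (hK : 1 ≤ K) (σ : ℕ → ℕ → ℝ)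
    (hσ : ∀ t k, 0 ≤ σ t k)
    (h : ∀ t k, 1 ≤ k → k < K → σ (t + 1) 0 ≤ σ t k) :
    ∀ T : ℕ, ∑ t ∈ Finset.range T, σ t 0 ≤
      (((K : ℝ) - 1) / K) * σ 0 0 +
        (1 / (K : ℝ)) * ∑ t ∈ Finset.range T, ∑ k ∈ Finset.range K, σ t k := by
  obtain ⟨n, rfl⟩ : ∃ n, K = n + 1 := ⟨K - 1, by omega⟩
  have row : ∀ t, σ t 0 + n * σ (t + 1) 0 ≤ ∑ k ∈ Finset.range (n + 1), σ t k := by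
    intro t
    rw [Finset.sum_range_succ']
    have h1 : ∑ k ∈ Finset.range n, σ (t + 1) 0 ≤ ∑ k ∈ Finset.range n, σ t (k + 1) := by
      apply Finset.sum_le_sum
      intro k hk
      have hk' := Finset.mem_range.mp hk
      exact h t (k + 1) (by omega) (by omega)
    simp only [Finset.sum_const, Finset.card_range, nsmul_eq_mul] at h1
    linarith
  have key : ∀ T : ℕ, ((n : ℝ) + 1) * ∑ t ∈ Finset.range T, σ t 0 + n * σ T 0 ≤
      n * σ 0 0 + ∑ t ∈ Finset.range T, ∑ k ∈ Finset.range (n + 1), σ t k := by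
    intro T
    induction T with
    | zero => simp
    | succ T ih =>
      rw [Finset.sum_range_succ, Finset.sum_range_succ (fun t => ∑ k ∈ Finset.range (n + 1), σ t k)]
      have := row T
      linarith
  intro T
  have hn : (0 : ℝ) < (n : ℝ) + 1 := by positivity
  have h2 := key T
  have h3 : 0 ≤ (n : ℝ) * σ T 0 := mul_nonneg (Nat.cast_nonneg n) (hσ T 0)
  push_cast
  rw [add_sub_cancel_right, div_mul_eq_mul_div, one_div_mul_eq_div, ← add_div, le_div_iff₀ hn]
  linarith
end

section
/- Let n be a natural number, let M be an n×n real symmetric positive semidefinite matrix whose diagonal entries satisfy M_{t,t} ≤ 1 for all t < n, and let σ > 0. For each t < n let M_t denote the top-left t×t block of M, let v_t ∈ ℝ^t be the vector with entries (M_{i,t})_{i<t}, and define the posterior variance s_t² := M_{t,t} - v_tᵀ (M_t + σ²·I_t)⁻¹ v_t. Then ∑_{t<n} s_t² ≤ (1 / log(1 + σ⁻²)) · log(det(I_n + σ⁻²·M)). -/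
open Matrix

lemma aux_step (n : ℕ) (M : Matrix (Fin (n+1)) (Fin (n+1)) ℝ)
    (hM : M.PosSemidef) (c : ℝ) (hc : 0 < c) (v : Fin n → ℝ)
    (hv : v = fun i => M i.castSucc (Fin.last n))
    (A : Matrix (Fin n) (Fin n) ℝ)
    (hA : A = M.submatrix Fin.castSucc Fin.castSucc + c • (1 : Matrix (Fin n) (Fin n) ℝ)) :
    0 ≤ M (Fin.last n) (Fin.last n) - v ⬝ᵥ A⁻¹ *ᵥ v ∧ 0 ≤ v ⬝ᵥ A⁻¹ *ᵥ v ∧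
    (M + c • (1 : Matrix (Fin (n+1)) (Fin (n+1)) ℝ)).det =
      A.det * (c + (M (Fin.last n) (Fin.last n) - v ⬝ᵥ A⁻¹ *ᵥ v)) := by
  have hAp : A.PosDef := by
    rw [hA]
    exact Matrix.PosDef.posSemidef_add (hM.submatrix _) (Matrix.PosDef.one.smul hc)
  have : Invertible A := hAp.isUnit.invertible
  have hsym : ∀ i j, M i j = M j i := fun i j => by
    have := hM.1.apply i j
    simpa using this.symm
  let B : Matrix (Fin n) (Fin 1) ℝ := Matrix.of fun i _ => v i
  have hS : ∀ d : ℝ, (Matrix.of (fun _ _ => d) : Matrix (Fin 1) (Fin 1) ℝ) - Bᴴ * A⁻¹ * B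
      = Matrix.of (fun _ _ => d - v ⬝ᵥ A⁻¹ *ᵥ v) := by
    intro d
    ext i j
    rw [Matrix.mul_assoc]
    simp [Matrix.mul_apply, dotProduct, mulVec, B]
  refine ⟨?_, ?_, ?_⟩
  · have h1 : (Matrix.fromBlocks A B Bᴴ (Matrix.of (fun _ _ => M (Fin.last n) (Fin.last n)))).PosSemidef := by
      have : Matrix.fromBlocks A B Bᴴ (Matrix.of (fun _ _ => M (Fin.last n) (Fin.last n)))
          = M.submatrix (finSumFinEquiv (m := n) (n := 1)) (finSumFinEquiv (m := n) (n := 1)) +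
            Matrix.diagonal (Sum.elim (fun _ => c) (fun _ => 0)) := by
        ext i j
        rcases i with i | i <;> rcases j with j | j
        · simp [hA, Matrix.one_apply, Matrix.diagonal_apply]; rfl
        · fin_cases j; simp [B, hv]; rfl
        · fin_cases i; simp [B, hv]; rw [hsym]; rfl
        · fin_cases i; fin_cases j; simp; rfl
      rw [this]
      refine (hM.submatrix _).add (Matrix.PosSemidef.diagonal ?_)
      intro i
      rcases i with i | i <;> simp [hc.le]
    rw [Matrix.PosDef.fromBlocks₁₁ _ _ hAp, hS] at h1
    exact h1.diag_nonneg (i := 0)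
  · have := hAp.inv.posSemidef.dotProduct_mulVec_nonneg v
    simpa using this
  · have : (M + c • (1 : Matrix (Fin (n+1)) (Fin (n+1)) ℝ)).submatrix (finSumFinEquiv (m := n) (n := 1)) (finSumFinEquiv (m := n) (n := 1)) =
        Matrix.fromBlocks A B Bᴴ (Matrix.of (fun _ _ => M (Fin.last n) (Fin.last n) + c)) := by
      ext i j
      rcases i with i | i <;> rcases j with j | j
      · simp [hA, Matrix.one_apply]; rfl
      · fin_cases j; simp [B, hv, Matrix.one_apply, Fin.ext_iff, i.2.ne]; rfl
      · fin_cases i; simp [B, hv, Matrix.one_apply, Fin.ext_iff, j.2.ne']; rw [hsym]; rfl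
      · fin_cases i; fin_cases j; simp; rfl
    rw [← Matrix.det_submatrix_equiv_self (finSumFinEquiv (m := n) (n := 1)), this,
      Matrix.det_fromBlocks₁₁, Matrix.invOf_eq_nonsing_inv, hS]
    simp
    left; ring

lemma aux_det (n : ℕ) (M : Matrix (Fin n) (Fin n) ℝ) (c : ℝ) (hc : 0 < c) :
    (1 + c⁻¹ • M).det = c⁻¹ ^ n * (M + c • (1 : Matrix (Fin n) (Fin n) ℝ)).det := by
  have : 1 + c⁻¹ • M = c⁻¹ • (M + c • (1 : Matrix (Fin n) (Fin n) ℝ)) := by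
    rw [smul_add, smul_smul, inv_mul_cancel₀ hc.ne', one_smul, add_comm]
  rw [this, Matrix.det_smul, Fintype.card_fin]

lemma aux_log (c s : ℝ) (hc : 0 < c) (h0 : 0 ≤ s) (h1 : s ≤ 1) :
    s * Real.log (1 + c) ≤ Real.log (1 + c * s) := by
  have := strictConcaveOn_log_Ioi.concaveOn.2 
    (show (1 + c) ∈ Set.Ioi (0:ℝ) by simp; linarith) (show (1:ℝ) ∈ Set.Ioi (0:ℝ) by simp) h0
    (show 0 ≤ 1 - s by linarith) (by ring)
  simp only [smul_eq_mul, Real.log_one, mul_zero, add_zero, mul_one] at this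
  have e : s * (1 + c) + (1 - s) = 1 + c * s := by ring
  rwa [e] at this

/-- Matrix form of Lemma 4: the sum of the Gaussian process posterior variances of
the selected points is at most `(1 / log (1 + σ⁻²))` times `log det (I + σ⁻² M)`. -/
theorem sum_posterior_variances_le (n : ℕ) (M : Matrix (Fin n) (Fin n) ℝ)
    (hM : M.PosSemidef) (hdiag : ∀ t : Fin n, M t t ≤ 1) (σ : ℝ) (hσ : 0 < σ) :
    ∑ t : Fin n,
        (M t t -
          (fun i : Fin (t : ℕ) => M (Fin.castLE t.isLt.le i) t) ⬝ᵥ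
            (M.submatrix (Fin.castLE t.isLt.le) (Fin.castLE t.isLt.le) +
                σ ^ 2 • (1 : Matrix (Fin (t : ℕ)) (Fin (t : ℕ)) ℝ))⁻¹ *ᵥ
              (fun i : Fin (t : ℕ) => M (Fin.castLE t.isLt.le i) t)) ≤
      (1 / Real.log (1 + (σ ^ 2)⁻¹)) *
        Real.log ((1 + (σ ^ 2)⁻¹ • M : Matrix (Fin n) (Fin n) ℝ).det) := by
  have hc : 0 < σ ^ 2 := by positivity
  generalize σ ^ 2 = c at hc
  have hL : 0 < Real.log (1 + c⁻¹) := Real.log_pos (by have := inv_pos.2 hc; linarith)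
  rw [one_div, inv_mul_eq_div, le_div_iff₀ hL]
  induction n with
  | zero => simp
  | succ n ih =>
    have ih' := ih (M.submatrix Fin.castSucc Fin.castSucc) (hM.submatrix _) (fun t => hdiag _)
    obtain ⟨h0, h1, h2⟩ := aux_step n M hM c hc _ rfl _ rfl
    have hp : 0 < (M.submatrix Fin.castSucc Fin.castSucc + c • (1 : Matrix (Fin n) (Fin n) ℝ)).det :=
      (Matrix.PosDef.posSemidef_add (hM.submatrix _) (Matrix.PosDef.one.smul hc)).det_pos
    rw [Fin.sum_univ_castSucc, add_mul]
    have hl := aux_log c⁻¹ _ (inv_pos.2 hc) h0 (by have := hdiag (Fin.last n); linarith)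
    have key : ∀ s : ℝ, 0 ≤ s → (M + c • (1 : Matrix (Fin (n+1)) (Fin (n+1)) ℝ)).det =
        (M.submatrix Fin.castSucc Fin.castSucc + c • (1 : Matrix (Fin n) (Fin n) ℝ)).det * (c + s) →
        Real.log (1 + c⁻¹ • M).det =
        Real.log (1 + c⁻¹ • M.submatrix Fin.castSucc Fin.castSucc).det + Real.log (1 + c⁻¹ * s) := by
      intro s h0 h2
      rw [← Real.log_mul _ (ne_of_gt (add_pos_of_pos_of_nonneg one_pos
        (mul_nonneg (inv_pos.2 hc).le h0)))]
      · rw [aux_det _ _ _ hc, aux_det _ _ _ hc, h2, pow_succ]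
        congr 1
        field_simp
      · rw [aux_det _ _ _ hc]; positivity
    rw [key _ h0 h2]
    exact add_le_add ih' hl
end

section
/- Let n be a natural number, let M be an n×n real symmetric positive semidefinite matrix, and let σ > 0. For each t < n let M_t denote the top-left t×t block of M, let v_t ∈ ℝ^t be the vector with entries (M_{i,t})_{i<t}, and define the posterior variance s_t² := M_{t,t} - v_tᵀ (M_t + σ²·I_t)⁻¹ v_t. Then det(I_n + σ⁻²·M) = ∏_{t<n} (1 + σ⁻²·s_t²). -/
open Matrix

lemma step_aux (n : ℕ) (M : Matrix (Fin (n+1)) (Fin (n+1)) ℝ) (hM : M.PosSemidef) (c : ℝ)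
    (hc : 0 < c) :
    (1 + c⁻¹ • M).det = (1 + c⁻¹ • M.submatrix Fin.castSucc Fin.castSucc).det *
      (1 + c⁻¹ * (M (Fin.last n) (Fin.last n) - (fun i : Fin n => M i.castSucc (Fin.last n)) ⬝ᵥ
        (M.submatrix Fin.castSucc Fin.castSucc + c • (1 : Matrix (Fin n) (Fin n) ℝ))⁻¹ *ᵥ
          (fun i : Fin n => M i.castSucc (Fin.last n)))) := by
  have key : ∀ (k : ℕ) (A : Matrix (Fin k) (Fin k) ℝ),
      (1 + c⁻¹ • A).det = c⁻¹ ^ k * (A + c • (1 : Matrix (Fin k) (Fin k) ℝ)).det := by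
    intro k A
    have : 1 + c⁻¹ • A = c⁻¹ • (A + c • (1 : Matrix (Fin k) (Fin k) ℝ)) := by
      rw [smul_add, smul_smul, inv_mul_cancel₀ hc.ne', one_smul, add_comm]
    rw [this, det_smul, Fintype.card_fin]
  rw [key, key]
  set N := M.submatrix Fin.castSucc Fin.castSucc + c • (1 : Matrix (Fin n) (Fin n) ℝ) with hN
  set v := fun i : Fin n => M i.castSucc (Fin.last n) with hv
  have hpd : N.PosDef :=
    Matrix.PosDef.posSemidef_add (hM.submatrix _) (Matrix.PosDef.one.smul hc)
  haveI : Invertible N := hpd.isUnit.invertible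
  have hsym : ∀ i j, M i j = M j i := fun i j => by simpa using (hM.isHermitian.apply i j).symm
  have hb : (M + c • (1 : Matrix (Fin (n+1)) (Fin (n+1)) ℝ)).submatrix
      (finSumFinEquiv (m := n) (n := 1)) finSumFinEquiv =
      fromBlocks N (replicateCol (Fin 1) v) (replicateRow (Fin 1) v)
        (of fun _ _ => M (Fin.last n) (Fin.last n) + c) := by
    have hl : Fin.natAdd n (0 : Fin 1) = Fin.last n := rfl
    have hcs : ∀ i : Fin n, Fin.castAdd 1 i = i.castSucc := fun _ => rfl
    ext i j
    rcases i with i | i <;> rcases j with j | j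
    · simp [hN, hcs, Matrix.one_apply]
    · obtain rfl := Subsingleton.elim j 0
      simp [hv, hl, hcs, Matrix.one_apply, (Fin.castSucc_lt_last i).ne]
    · obtain rfl := Subsingleton.elim i 0
      simp [hv, hl, hcs, Matrix.one_apply, (Fin.castSucc_lt_last j).ne']
      exact hsym _ _
    · obtain rfl := Subsingleton.elim i 0
      obtain rfl := Subsingleton.elim j 0
      simp [hl]
  have hd : (M + c • (1 : Matrix (Fin (n+1)) (Fin (n+1)) ℝ)).det =
      N.det * (M (Fin.last n) (Fin.last n) + c - v ⬝ᵥ N⁻¹ *ᵥ v) := by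
    rw [← det_submatrix_equiv_self (finSumFinEquiv (m := n) (n := 1)), hb, det_fromBlocks₁₁,
      invOf_eq_nonsing_inv, det_fin_one, Matrix.mul_assoc]
    rfl
  rw [hd, pow_succ]
  have h1 : c⁻¹ * c = 1 := inv_mul_cancel₀ hc.ne'
  linear_combination (c⁻¹ ^ n * N.det) * h1

/-- Matrix form of the information-gain identity (Lemma 5.3 of Srinivas et al.):
`det (I + σ⁻² M) = ∏_t (1 + σ⁻² s_t²)` where `s_t²` is the posterior variance of the
`t`-th point given noisy observations at the previous `t` points. -/
theorem det_eq_prod_posterior_variances (n : ℕ) (M : Matrix (Fin n) (Fin n) ℝ)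
    (hM : M.PosSemidef) (σ : ℝ) (hσ : 0 < σ) :
    (1 + (σ ^ 2)⁻¹ • M : Matrix (Fin n) (Fin n) ℝ).det =
      ∏ t : Fin n,
        (1 + (σ ^ 2)⁻¹ *
          (M t t -
            (fun i : Fin (t : ℕ) => M (Fin.castLE t.isLt.le i) t) ⬝ᵥ
              (M.submatrix (Fin.castLE t.isLt.le) (Fin.castLE t.isLt.le) +
                  σ ^ 2 • (1 : Matrix (Fin (t : ℕ)) (Fin (t : ℕ)) ℝ))⁻¹ *ᵥ
                (fun i : Fin (t : ℕ) => M (Fin.castLE t.isLt.le i) t))) := by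
  induction n with
  | zero => simp
  | succ n ih =>
    rw [step_aux n M hM (σ ^ 2) (by positivity), Fin.prod_univ_castSucc,
      ih (M.submatrix Fin.castSucc Fin.castSucc) (hM.submatrix _)]
    rfl
end

section
/- Let n be a natural number, let N be an (n+1)×(n+1) real symmetric positive semidefinite matrix, and let σ > 0. For a subset S ⊆ {0, …, n-1}, let A_S be the principal submatrix of N with rows and columns in S, let b_S be the vector (N_{i,n})_{i∈S}, and define var(S) := N_{n,n} - b_Sᵀ (A_S + σ²·I_S)⁻¹ b_S. Then for all subsets S ⊆ T ⊆ {0, …, n-1}, var(T) ≤ var(S). -/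
open Matrix

/-- The Gaussian process posterior variance of a distinguished point (indexed `n`)
given noisy observations at the points indexed by `S`. -/
noncomputable def postVar (n : ℕ) (N : Matrix (Fin (n + 1)) (Fin (n + 1)) ℝ) (σ : ℝ)
    (S : Finset (Fin n)) : ℝ :=
  N (Fin.last n) (Fin.last n) -
    (fun i : ↥S => N (Fin.castSucc (i : Fin n)) (Fin.last n)) ⬝ᵥ
      ((Matrix.of fun i j : ↥S => N (Fin.castSucc (i : Fin n)) (Fin.castSucc (j : Fin n))) +
          σ ^ 2 • (1 : Matrix ↥S ↥S ℝ))⁻¹ *ᵥ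
        fun i : ↥S => N (Fin.castSucc (i : Fin n)) (Fin.last n)

lemma quad_inv_submatrix_le {s t : Type*} [Fintype s] [Fintype t] [DecidableEq s] [DecidableEq t]
    (M : Matrix t t ℝ) (hM : M.PosDef) (e : s → t) (he : Function.Injective e) (b : t → ℝ) :
    (b ∘ e) ⬝ᵥ (M.submatrix e e)⁻¹ *ᵥ (b ∘ e) ≤ b ⬝ᵥ M⁻¹ *ᵥ b := by
  have hS : (M.submatrix e e).PosDef := hM.submatrix he
  have hMT : Mᵀ = M := by simpa using hM.isHermitian.eq
  set u := M⁻¹ *ᵥ b with hu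
  set z := (M.submatrix e e)⁻¹ *ᵥ (b ∘ e) with hz
  have hMu : M *ᵥ u = b := by
    rw [hu, mulVec_mulVec, mul_nonsing_inv _ ((isUnit_iff_isUnit_det _).1 hM.isUnit), one_mulVec]
  have hSz : M.submatrix e e *ᵥ z = b ∘ e := by
    rw [hz, mulVec_mulVec, mul_nonsing_inv _ ((isUnit_iff_isUnit_det _).1 hS.isUnit), one_mulVec]
  set P : Matrix t s ℝ := (1 : Matrix t t ℝ).submatrix id e with hP
  have hPc : ∀ c : t → ℝ, c ⬝ᵥ P *ᵥ z = (c ∘ e) ⬝ᵥ z := by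
    intro c
    rw [dotProduct_mulVec]
    congr 1
    ext i
    simp [hP, vecMul, dotProduct, Matrix.one_apply]
  have hMP : (M *ᵥ P *ᵥ z) ∘ e = M.submatrix e e *ᵥ z := by
    ext i
    exact hPc (M (e i))
  have h := hM.posSemidef.dotProduct_mulVec_nonneg (u - P *ᵥ z)
  have h1 : u ⬝ᵥ M *ᵥ P *ᵥ z = (b ∘ e) ⬝ᵥ z := by
    rw [dotProduct_mulVec, ← mulVec_transpose, hMT, hMu, hPc]
  have h2 : (P *ᵥ z) ⬝ᵥ M *ᵥ P *ᵥ z = (b ∘ e) ⬝ᵥ z := by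
    rw [dotProduct_comm, hPc, hMP, hSz]
  have h3 : (P *ᵥ z) ⬝ᵥ b = (b ∘ e) ⬝ᵥ z := by
    rw [dotProduct_comm, hPc]
  simp only [star_trivial, mulVec_sub, dotProduct_sub, sub_dotProduct, hMu, h1, h2, h3] at h
  rw [dotProduct_comm u b] at h
  linarith

/-- "Information never hurts": the posterior variance is non-increasing in the set of
observation points. -/
theorem postVar_antitone (n : ℕ) (N : Matrix (Fin (n + 1)) (Fin (n + 1)) ℝ)
    (hN : N.PosSemidef) (σ : ℝ) (hσ : 0 < σ) (S T : Finset (Fin n)) (hST : S ⊆ T) :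
    postVar n N σ T ≤ postVar n N σ S := by
  classical
  have hT : ((Matrix.of fun i j : ↥T => N (Fin.castSucc (i : Fin n)) (Fin.castSucc (j : Fin n))) +
      σ ^ 2 • (1 : Matrix ↥T ↥T ℝ)).PosDef := by
    refine Matrix.PosDef.posSemidef_add ?_ (Matrix.PosDef.one.smul (by positivity))
    exact hN.submatrix (fun i : ↥T => Fin.castSucc (i : Fin n))
  let e : ↥S → ↥T := fun i => ⟨i, hST i.2⟩
  have he : Function.Injective e := fun i j h => Subtype.ext (congrArg (fun x : ↥T => (x : Fin n)) h)
  have key := quad_inv_submatrix_le _ hT e he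
    (fun i : ↥T => N (Fin.castSucc (i : Fin n)) (Fin.last n))
  have hsub : ((Matrix.of fun i j : ↥T => N (Fin.castSucc (i : Fin n)) (Fin.castSucc (j : Fin n))) +
      σ ^ 2 • (1 : Matrix ↥T ↥T ℝ)).submatrix e e =
      (Matrix.of fun i j : ↥S => N (Fin.castSucc (i : Fin n)) (Fin.castSucc (j : Fin n))) +
      σ ^ 2 • (1 : Matrix ↥S ↥S ℝ) := by
    ext i j
    have h1 : (1 : Matrix ↥T ↥T ℝ) (e i) (e j) = (1 : Matrix ↥S ↥S ℝ) i j := by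
      rw [Matrix.one_apply, Matrix.one_apply]
      exact if_congr he.eq_iff rfl rfl
    rw [Matrix.submatrix_apply, Matrix.add_apply, Matrix.add_apply, Matrix.smul_apply,
      Matrix.smul_apply, h1]
    rfl
  rw [hsub] at key
  exact sub_le_sub_left key _
end

section
/- Let (Ω, P) be a probability space, let D be a nonempty finite set, let 0 < δ < 1, and for each natural number t and each i ∈ D let X_{t,i} : Ω → ℝ be a measurable random variable whose law is the standard Gaussian measure (mean 0, variance 1). Define β_t := 2·log(|D|·(t+1)²·π²/(6·δ)). Then P({ω ∈ Ω : ∃ t ∈ ℕ, ∃ i ∈ D, |X_{t,i}(ω)| > √β_t}) ≤ δ. -/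
open MeasureTheory ProbabilityTheory

lemma aux_upper (c : ℝ) (hc : 0 ≤ c) : gaussianReal 0 1 (Set.Ioi c) ≤
    ENNReal.ofReal (Real.exp (-c ^ 2 / 2)) * gaussianReal 0 1 (Set.Ioi 0) := by
  rw [gaussianReal_apply 0 one_ne_zero, gaussianReal_apply 0 one_ne_zero,
    ← lintegral_indicator measurableSet_Ioi, ← lintegral_indicator measurableSet_Ioi,
    ← lintegral_add_right_eq_self _ c, ← lintegral_const_mul' _ _ ENNReal.ofReal_ne_top]
  refine lintegral_mono fun y => ?_
  by_cases hy : 0 < y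
  · have h1 : y + c ∈ Set.Ioi c := by simpa using hy
    have h2 : y ∈ Set.Ioi (0 : ℝ) := hy
    rw [Set.indicator_of_mem h1, Set.indicator_of_mem h2]
    unfold gaussianPDF
    rw [← ENNReal.ofReal_mul (Real.exp_nonneg _)]
    apply ENNReal.ofReal_le_ofReal
    unfold gaussianPDFReal
    rw [mul_left_comm, ← Real.exp_add]
    gcongr
    simp only [NNReal.coe_one, sub_zero]
    nlinarith [mul_nonneg hy.le hc]
  · have h1 : y + c ∉ Set.Ioi c := by simpa using hy
    rw [Set.indicator_of_notMem h1]
    exact zero_le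

lemma aux_neg (c : ℝ) : gaussianReal 0 1 (Set.Iio (-c)) = gaussianReal 0 1 (Set.Ioi c) := by
  have h := gaussianReal_map_neg (μ := 0) (v := 1)
  rw [neg_zero] at h
  conv_lhs => rw [← h]
  rw [Measure.map_apply measurable_neg measurableSet_Iio]
  congr 1
  ext x
  simp

lemma aux_tail (c : ℝ) (hc : 0 ≤ c) : gaussianReal 0 1 {x | c < |x|} ≤
    ENNReal.ofReal (Real.exp (-c ^ 2 / 2)) := by
  have h0 : {x : ℝ | c < |x|} = Set.Ioi c ∪ Set.Iio (-c) := by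
    ext x
    simp only [Set.mem_ofPred_eq, lt_abs, Set.mem_union, Set.mem_Ioi, Set.mem_Iio, lt_neg]
  have h1 : gaussianReal 0 1 (Set.Ioi 0) + gaussianReal 0 1 (Set.Ioi 0) ≤ 1 := by
    have := aux_neg 0
    rw [neg_zero] at this
    conv_lhs => rw [← this]
    rw [this, ← this]
    conv_lhs => arg 2; rw [this]
    rw [← measure_union _ measurableSet_Ioi]
    · exact prob_le_one
    · rw [Set.disjoint_left]
      intro x hx hx'
      exact lt_asymm (Set.mem_Iio.1 hx) (Set.mem_Ioi.1 hx')
  calc _ ≤ gaussianReal 0 1 (Set.Ioi c) + gaussianReal 0 1 (Set.Iio (-c)) := by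
        rw [h0]; exact measure_union_le _ _
    _ ≤ ENNReal.ofReal (Real.exp (-c ^ 2 / 2)) *
        (gaussianReal 0 1 (Set.Ioi 0) + gaussianReal 0 1 (Set.Ioi 0)) := by
        rw [aux_neg, mul_add]; exact add_le_add (aux_upper c hc) (aux_upper c hc)
    _ ≤ ENNReal.ofReal (Real.exp (-c ^ 2 / 2)) * 1 := by gcongr
    _ = _ := mul_one _

/-- Calibration of the confidence parameter for finite decision sets: with
`β t = 2 log (|D| (t+1)² π² / (6 δ))`, all the standard Gaussian variables `X t i`
stay within `√(β t)` simultaneously with probability at least `1 - δ`. -/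
theorem confidence_calibration {Ω : Type*} [MeasurableSpace Ω] (P : Measure Ω)
    [IsProbabilityMeasure P] {D : Type*} [Fintype D] [Nonempty D]
    (δ : ℝ) (hδ0 : 0 < δ) (hδ1 : δ < 1)
    (X : ℕ → D → Ω → ℝ) (hmeas : ∀ t i, Measurable (X t i))
    (hlaw : ∀ t i, P.map (X t i) = gaussianReal 0 1) :
    P {ω : Ω | ∃ t : ℕ, ∃ i : D,
        Real.sqrt (2 * Real.log ((Fintype.card D : ℝ) * ((t : ℝ) + 1) ^ 2 * Real.pi ^ 2 /
          (6 * δ))) < |X t i ω|} ≤ ENNReal.ofReal δ := by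
  have hn : (1 : ℝ) ≤ Fintype.card D := by exact_mod_cast Fintype.card_pos
  have hpi : (6 : ℝ) ≤ Real.pi ^ 2 := by nlinarith [Real.pi_gt_three]
  have key : ∀ (t : ℕ) (i : D), P {ω | Real.sqrt (2 * Real.log ((Fintype.card D : ℝ) *
      ((t : ℝ) + 1) ^ 2 * Real.pi ^ 2 / (6 * δ))) < |X t i ω|} ≤
      ENNReal.ofReal (6 * δ / ((Fintype.card D : ℝ) * ((t : ℝ) + 1) ^ 2 * Real.pi ^ 2)) := by
    intro t i
    set A : ℝ := (Fintype.card D : ℝ) * ((t : ℝ) + 1) ^ 2 * Real.pi ^ 2 / (6 * δ) with hA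
    have ht : (1 : ℝ) ≤ ((t : ℝ) + 1) ^ 2 := by
      have : (0 : ℝ) ≤ t := t.cast_nonneg
      nlinarith
    have hA1 : 1 ≤ A := by
      rw [hA, le_div_iff₀ (by positivity)]
      have h1 : (1 : ℝ) ≤ (Fintype.card D : ℝ) * ((t : ℝ) + 1) ^ 2 := one_le_mul_of_one_le_of_one_le hn ht
      nlinarith
    have hlog : 0 ≤ 2 * Real.log A := by have := Real.log_nonneg hA1; linarith
    have h := aux_tail (Real.sqrt (2 * Real.log A)) (Real.sqrt_nonneg _)
    rw [← hlaw t i, Measure.map_apply (hmeas t i)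
      (show MeasurableSet {x : ℝ | Real.sqrt (2 * Real.log A) < |x|} from
        measurableSet_lt measurable_const measurable_id.abs), Real.sq_sqrt hlog] at h
    have h2 : Real.exp (-(2 * Real.log A) / 2) =
        6 * δ / ((Fintype.card D : ℝ) * ((t : ℝ) + 1) ^ 2 * Real.pi ^ 2) := by
      rw [show -(2 * Real.log A) / 2 = -Real.log A by ring, Real.exp_neg,
        Real.exp_log (by linarith), hA, inv_div]
    rw [h2] at h
    exact h
  have hs : HasSum (fun t : ℕ => 6 * δ / Real.pi ^ 2 * (1 / ((t : ℝ) + 1) ^ 2)) δ := by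
    have h := (hasSum_nat_add_iff' 1).2 hasSum_zeta_two
    have h' := h.mul_left (6 * δ / Real.pi ^ 2)
    have e : 6 * δ / Real.pi ^ 2 * (Real.pi ^ 2 / 6) = δ := by field_simp
    simpa [e] using h'
  calc _ = P (⋃ t : ℕ, ⋃ i : D, {ω | Real.sqrt (2 * Real.log ((Fintype.card D : ℝ) *
      ((t : ℝ) + 1) ^ 2 * Real.pi ^ 2 / (6 * δ))) < |X t i ω|}) := by
        congr 1; ext ω; simp only [Set.mem_ofPred_eq, Set.mem_iUnion]
    _ ≤ ∑' t : ℕ, ENNReal.ofReal (6 * δ / Real.pi ^ 2 * (1 / ((t : ℝ) + 1) ^ 2)) := by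
        refine (measure_iUnion_le _).trans (ENNReal.tsum_le_tsum fun t => ?_)
        refine (measure_iUnion_fintype_le _ _).trans ((Finset.sum_le_sum fun i _ => key t i).trans ?_)
        rw [Finset.sum_const, Finset.card_univ, nsmul_eq_mul, ← ENNReal.ofReal_natCast,
          ← ENNReal.ofReal_mul (by positivity)]
        apply le_of_eq
        congr 1
        field_simp
    _ = ENNReal.ofReal δ := by
        rw [← ENNReal.ofReal_tsum_of_nonneg (fun t => by positivity) hs.summable, hs.tsum_eq]
end

section
/- Let T ≥ 1 and K ≥ 1 be natural numbers, let B ≥ 0 and C ≥ 0 be reals, let β : ℕ → ℝ satisfy 0 ≤ β_t ≤ B for all t < T, let σ : ℕ → ℕ → ℝ be nonnegative, and let r : ℕ → ℝ. Assume: (i) r_t ≤ 2·√(β_t)·σ(t, 0) for all t < T; (ii) σ(t+1, 0) ≤ σ(t, k) for all t and all k with 1 ≤ k < K; (iii) ∑_{t<T} ∑_{k<K} σ(t, k)² ≤ C. Then ∑_{t<T} r_t ≤ 2·√B·σ(0, 0) + √(4·B·T·C/K). -/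
/-- Deterministic skeleton of Lemma 5 / Theorem 1 (batch cumulative regret bound). -/
theorem batch_cumulative_regret_bound (T K : ℕ) (hT : 1 ≤ T) (hK : 1 ≤ K)
    (B C : ℝ) (hB : 0 ≤ B) (hC : 0 ≤ C)
    (β : ℕ → ℝ) (hβ : ∀ t < T, 0 ≤ β t ∧ β t ≤ B)
    (σ : ℕ → ℕ → ℝ) (hσ : ∀ t k, 0 ≤ σ t k) (r : ℕ → ℝ)
    (hr : ∀ t < T, r t ≤ 2 * Real.sqrt (β t) * σ t 0)
    (hmono : ∀ t k, 1 ≤ k → k < K → σ (t + 1) 0 ≤ σ t k)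
    (hsum : ∑ t ∈ Finset.range T, ∑ k ∈ Finset.range K, (σ t k) ^ 2 ≤ C) :
    ∑ t ∈ Finset.range T, r t ≤
      2 * Real.sqrt B * σ 0 0 + Real.sqrt (4 * B * T * C / K) := by
  obtain ⟨n, rfl⟩ : ∃ n, K = n + 1 := ⟨K - 1, by omega⟩
  set S := ∑ t ∈ Finset.range T, σ t 0 with hS
  set A := ∑ t ∈ Finset.range T, ∑ k ∈ Finset.range (n + 1), σ t k with hA
  have hKpos : (0 : ℝ) < ((n + 1 : ℕ) : ℝ) := by positivity
  have h1 : ∑ t ∈ Finset.range T, r t ≤ 2 * Real.sqrt B * S := by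
    rw [hS, Finset.mul_sum]
    refine Finset.sum_le_sum fun t ht => ?_
    have ht' := Finset.mem_range.1 ht
    refine (hr t ht').trans ?_
    have := Real.sqrt_le_sqrt (hβ t ht').2
    exact mul_le_mul_of_nonneg_right (by linarith) (hσ t 0)
  have h2 : ∀ t, σ t 0 + n * σ (t + 1) 0 ≤ ∑ k ∈ Finset.range (n + 1), σ t k := by
    intro t
    rw [Finset.sum_range_succ']
    have : ∑ k ∈ Finset.range n, σ (t + 1) 0 ≤ ∑ k ∈ Finset.range n, σ t (k + 1) := by
      refine Finset.sum_le_sum fun k hk => ?_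
      have := Finset.mem_range.1 hk
      exact hmono t (k + 1) (by omega) (by omega)
    rw [Finset.sum_const, Finset.card_range, nsmul_eq_mul] at this
    linarith
  have h3 : S + n * ∑ t ∈ Finset.range T, σ (t + 1) 0 ≤ A := by
    rw [hS, Finset.mul_sum, ← Finset.sum_add_distrib]
    exact Finset.sum_le_sum fun t _ => h2 t
  have h4 : S - σ 0 0 ≤ ∑ t ∈ Finset.range T, σ (t + 1) 0 := by
    have e1 := Finset.sum_range_succ (fun t => σ t 0) T
    have e2 := Finset.sum_range_succ' (fun t => σ t 0) T
    have := hσ T 0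
    linarith
  have h5 : ((n + 1 : ℕ) : ℝ) * (S - σ 0 0) ≤ A := by
    have := mul_le_mul_of_nonneg_left h4 (Nat.cast_nonneg (α := ℝ) n)
    have := hσ 0 0
    push_cast
    linarith
  have h6 : A ^ 2 ≤ T * (((n + 1 : ℕ) : ℝ) * C) := by
    have e1 := sq_sum_le_card_mul_sum_sq (s := Finset.range T)
      (f := fun t => ∑ k ∈ Finset.range (n + 1), σ t k)
    rw [Finset.card_range] at e1
    refine e1.trans (mul_le_mul_of_nonneg_left ?_ (Nat.cast_nonneg _))
    refine le_trans ?_ (mul_le_mul_of_nonneg_left hsum hKpos.le)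
    rw [Finset.mul_sum]
    refine Finset.sum_le_sum fun t _ => ?_
    have e2 := sq_sum_le_card_mul_sum_sq (s := Finset.range (n + 1)) (f := fun k => σ t k)
    rwa [Finset.card_range] at e2
  have hA0 : 0 ≤ A := Finset.sum_nonneg fun t _ => Finset.sum_nonneg fun k _ => hσ t k
  have h7 : 2 * Real.sqrt B * (A / ((n + 1 : ℕ) : ℝ)) ≤
      Real.sqrt (4 * B * T * C / ((n + 1 : ℕ) : ℝ)) := by
    apply Real.le_sqrt_of_sq_le
    rw [mul_pow, mul_pow, Real.sq_sqrt hB, div_pow, mul_div_assoc', div_le_div_iff₀ (by positivity) hKpos]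
    have := mul_le_mul_of_nonneg_left h6 (mul_nonneg hB hKpos.le)
    nlinarith
  have h8 : S - σ 0 0 ≤ A / ((n + 1 : ℕ) : ℝ) := by
    rw [le_div_iff₀ hKpos]
    linarith
  have h9 := mul_le_mul_of_nonneg_left h8 (by positivity : 0 ≤ 2 * Real.sqrt B)
  linarith
end

section
/- Let X be a nonempty set, let f, μ, s : X → ℝ with s(x) ≥ 0 for all x, and let b, b' be reals with 0 ≤ b ≤ b' and 2·b' ≤ 3·b. Assume |f(x) - μ(x)| ≤ b·s(x) for all x ∈ X. Let x• ∈ X be a maximizer of μ - b·s over X, let x_k ∈ X satisfy μ(x_k) + 2·b'·s(x_k) ≥ μ(x•) - b·s(x•), and let x⋆ ∈ X satisfy s(x⋆) ≤ s(x_k). Then f(x⋆) - f(x_k) ≤ 6·b·s(x_k). -/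
/-- Deterministic core of Lemma 6: regret bound for the Pure Exploration queries. -/
theorem pure_exploration_regret_bound {X : Type*} [Nonempty X]
    (f μ s : X → ℝ) (hs : ∀ x : X, 0 ≤ s x)
    (b b' : ℝ) (hb : 0 ≤ b) (hbb' : b ≤ b') (hb' : 2 * b' ≤ 3 * b)
    (hconf : ∀ x : X, |f x - μ x| ≤ b * s x)
    (xb : X) (hxb : ∀ x : X, μ x - b * s x ≤ μ xb - b * s xb)
    (xk : X) (hxk : μ xb - b * s xb ≤ μ xk + 2 * b' * s xk)
    (xstar : X) (hstar : s xstar ≤ s xk) :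
    f xstar - f xk ≤ 6 * b * s xk := by
  have h1 := abs_le.mp (hconf xstar)
  have h2 := abs_le.mp (hconf xk)
  have h3 := hxb xstar
  have h4 := mul_le_mul_of_nonneg_left hstar hb
  have h5 := mul_le_mul_of_nonneg_right hb' (hs xk)
  linarith [h1.2, h2.1]
end
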